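/- arXiv:2012.14698 — 2 statements merged into one kernel-verified Lean document; each statement's English description precedes it below -/
import Mathlib

section
/- Let f : {0,1}^n → ℝ_+ be a nonnegative function, K ⊆ ℝ^q a convex cone containing the origin, A ∈ ℝ^{q×m}, B ∈ ℝ^q. Define S̄(f,K) := {(x,z) ∈ ℝ^m × {0,1}^n : Ax + B f(z) ∈ K}. Then conv(S̄(f,K)) ⊆ Ŝ(f,K), and if moreover S̄(f,K) = S(f,K), then conv(S̄(f,K)) = Ŝ(f,K). -/
/-!
Write `(y, z)` as a convex combination of points `(yᵢ, zᵢ)` of the epigraph and let `(x, y)` lie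
in the cone `{(x, y) | A x + y B ∈ K}`. If `y > 0`, the points `((yᵢ / y) x, yᵢ)` are nonnegative
multiples of `(x, y)`, hence lie in the cone, and they average to `(x, y)`. If `y = 0`,
nonnegativity of `f` forces `yᵢ = 0` wherever the weight is positive, and the points `(x, 0)` serve.
So imposing the conic constraint commutes with taking the convex hull; projecting `y` away gives
`conv S = Ŝ`, and `conv S̄ ⊆ Ŝ` because `S̄ ⊆ S`.
-/

section ConicLift

variable {𝕜 E F : Type*} [Field 𝕜] [LinearOrder 𝕜] [IsStrictOrderedRing 𝕜]
  [AddCommGroup E] [Module 𝕜 E] [AddCommGroup F] [Module 𝕜 F]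

theorem convexHull_sep_apply_eq_zero (l : F →ₗ[𝕜] 𝕜) {P : Set F} (hP : ∀ p ∈ P, 0 ≤ l p) :
    convexHull 𝕜 {p ∈ P | l p = 0} = {p ∈ convexHull 𝕜 P | l p = 0} := by
  refine Set.Subset.antisymm (convexHull_min (fun p hp ↦ ⟨subset_convexHull 𝕜 P hp.1, hp.2⟩) ?_) ?_
  · exact (convex_convexHull 𝕜 P).inter ((convex_singleton (0 : 𝕜)).linear_preimage l)
  · suffices h : convexHull 𝕜 P ⊆
        {p | 0 ≤ l p ∧ (l p = 0 → p ∈ convexHull 𝕜 {p ∈ P | l p = 0})} from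
      fun p hp ↦ (h hp.1).2 hp.2
    refine convexHull_min
      (fun p hp ↦ ⟨hP p hp, fun hlp ↦ subset_convexHull 𝕜 _ ⟨hp, hlp⟩⟩) ?_
    rw [convex_iff_forall_pos]
    rintro p ⟨hp, hp_hull⟩ r ⟨hr, hr_hull⟩ a b ha hb hab
    have hap : 0 ≤ a * l p := mul_nonneg ha.le hp
    have hbr : 0 ≤ b * l r := mul_nonneg hb.le hr
    have hl : l (a • p + b • r) = a * l p + b * l r := by simp
    refine ⟨hl ▸ add_nonneg hap hbr, fun h0 ↦ ?_⟩
    rw [hl, add_eq_zero_iff_of_nonneg hap hbr, mul_eq_zero_iff_left ha.ne',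
      mul_eq_zero_iff_left hb.ne'] at h0
    exact convex_convexHull 𝕜 _ (hp_hull h0.1) (hr_hull h0.2) ha.le hb.le hab

/-- The pairs `(x, p)` with `p ∈ P` that satisfy the conic constraint `(x, l p) ∈ D`. For the
constraint `A x + y B ∈ K`, the functional `l` reads off `y` and `D` is the cone of all admissible
`(x, y)`. -/
def conicLift (D : PointedCone 𝕜 (E × 𝕜)) (l : F →ₗ[𝕜] 𝕜) (P : Set F) : Set (E × F) :=
  {w | w.2 ∈ P ∧ (w.1, l w.2) ∈ D}

theorem conicLift_mono (D : PointedCone 𝕜 (E × 𝕜)) (l : F →ₗ[𝕜] 𝕜) {P Q : Set F} (h : P ⊆ Q) :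
    conicLift D l P ⊆ conicLift D l Q :=
  fun _ hw ↦ ⟨h hw.1, hw.2⟩

theorem convex_conicLift (D : PointedCone 𝕜 (E × 𝕜)) (l : F →ₗ[𝕜] 𝕜) {P : Set F}
    (hP : Convex 𝕜 P) : Convex 𝕜 (conicLift D l P) :=
  (hP.linear_preimage (LinearMap.snd 𝕜 E F)).inter
    (D.convex.linear_preimage (LinearMap.id.prodMap l))

theorem mem_convexHull_conicLift_of_apply_eq_zero {D : PointedCone 𝕜 (E × 𝕜)} {l : F →ₗ[𝕜] 𝕜}
    {P : Set F} (hP : ∀ p ∈ P, 0 ≤ l p) {x : E} {p : F} (hp : p ∈ convexHull 𝕜 P)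
    (hD : (x, l p) ∈ D) (hlp : l p = 0) : (x, p) ∈ convexHull 𝕜 (conicLift D l P) := by
  have hface : {x} ×ˢ {r ∈ P | l r = 0} ⊆ conicLift D l P := by
    rintro ⟨_, r⟩ ⟨rfl, hr, hlr⟩
    exact ⟨hr, by simpa only [hlr, hlp] using hD⟩
  apply convexHull_mono hface
  rw [convexHull_prod, convexHull_singleton, convexHull_sep_apply_eq_zero l hP]
  exact ⟨rfl, hp, hlp⟩

theorem mem_convexHull_conicLift_of_apply_pos {D : PointedCone 𝕜 (E × 𝕜)} {l : F →ₗ[𝕜] 𝕜}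
    {P : Set F} (hP : ∀ p ∈ P, 0 ≤ l p) {x : E} {p : F} (hp : p ∈ convexHull 𝕜 P)
    (hD : (x, l p) ∈ D) (hlp : 0 < l p) : (x, p) ∈ convexHull 𝕜 (conicLift D l P) := by
  let φ : F →ₗ[𝕜] E × F := (l.smulRight ((l p)⁻¹ • x)).prod LinearMap.id
  have hφ : φ '' P ⊆ conicLift D l P := by
    rintro _ ⟨r, hr, rfl⟩
    have hray : (l r * (l p)⁻¹) • (x, l p) = ((φ r).1, l (φ r).2) := by
      simp [φ, smul_smul, hlp.ne']
    exact ⟨hr, hray ▸ D.smul_mem (mul_nonneg (hP r hr) (inv_nonneg.2 hlp.le)) hD⟩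
  have hφp : φ p = (x, p) := by simp [φ, smul_smul, hlp.ne']
  apply convexHull_mono hφ
  rw [← φ.image_convexHull, ← hφp]
  exact Set.mem_image_of_mem φ hp

theorem convexHull_conicLift (D : PointedCone 𝕜 (E × 𝕜)) (l : F →ₗ[𝕜] 𝕜) {P : Set F}
    (hP : ∀ p ∈ P, 0 ≤ l p) :
    convexHull 𝕜 (conicLift D l P) = conicLift D l (convexHull 𝕜 P) := by
  refine Set.Subset.antisymm ?_ ?_
  · exact convexHull_min (conicLift_mono D l (subset_convexHull 𝕜 P))
      (convex_conicLift D l (convex_convexHull 𝕜 P))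
  · rintro ⟨x, p⟩ ⟨hp, hD⟩
    have hlp : 0 ≤ l p := convexHull_min hP ((convex_Ici (0 : 𝕜)).linear_preimage l) hp
    rcases hlp.eq_or_lt with hzero | hpos
    · exact mem_convexHull_conicLift_of_apply_eq_zero hP hp hD hzero.symm
    · exact mem_convexHull_conicLift_of_apply_pos hP hp hD hpos

end ConicLift

section ConicSets

variable {𝕜 E F : Type*} [Field 𝕜] [LinearOrder 𝕜] [IsStrictOrderedRing 𝕜]
  [AddCommGroup E] [Module 𝕜 E]

/-- The epigraph of `f` restricted to `V`, with the height as first coordinate. -/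
def epigraphOn (f : F → 𝕜) (V : Set F) : Set (𝕜 × F) :=
  {p | p.2 ∈ V ∧ f p.2 ≤ p.1}

/-- The set `S̄(f, K)`, with a set `V` in place of `{0,1}ⁿ` and the constraint `A x + y B ∈ K`
encoded as `(x, y) ∈ D`. -/
def exactConicSet (D : PointedCone 𝕜 (E × 𝕜)) (f : F → 𝕜) (V : Set F) : Set (E × F) :=
  {w | w.2 ∈ V ∧ (w.1, f w.2) ∈ D}

/-- The set `S(f, K)`, with a set `V` in place of `{0,1}ⁿ` and the constraint `A x + y B ∈ K`
encoded as `(x, y) ∈ D`. -/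
def conicSet (D : PointedCone 𝕜 (E × 𝕜)) (f : F → 𝕜) (V : Set F) : Set (E × F) :=
  {w | w.2 ∈ V ∧ ∃ y, f w.2 ≤ y ∧ (w.1, y) ∈ D}

theorem exactConicSet_subset_conicSet (D : PointedCone 𝕜 (E × 𝕜)) (f : F → 𝕜) (V : Set F) :
    exactConicSet D f V ⊆ conicSet D f V :=
  fun w hw ↦ ⟨hw.1, f w.2, le_rfl, hw.2⟩

variable [AddCommGroup F] [Module 𝕜 F]

/-- The set `Ŝ(f, K)`, with `V` in place of `{0,1}ⁿ`, a set `C` in place of the box `[0,1]ⁿ`, and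
the constraint `A x + y B ∈ K` encoded as `(x, y) ∈ D`. -/
def conicRelaxation (D : PointedCone 𝕜 (E × 𝕜)) (f : F → 𝕜) (V C : Set F) : Set (E × F) :=
  {w | w.2 ∈ C ∧ ∃ y, 0 ≤ y ∧ (y, w.2) ∈ convexHull 𝕜 (epigraphOn f V) ∧ (w.1, y) ∈ D}

theorem convexHull_epigraphOn_subset {f : F → 𝕜} {V C : Set F} (hf : ∀ z ∈ V, 0 ≤ f z)
    (hVC : V ⊆ C) (hC : Convex 𝕜 C) : convexHull 𝕜 (epigraphOn f V) ⊆ Set.Ici 0 ×ˢ C :=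
  convexHull_min (fun p hp ↦ ⟨(hf p.2 hp.1).trans hp.2, hVC hp.1⟩) ((convex_Ici 0).prod hC)

theorem conicSet_eq_image_conicLift (D : PointedCone 𝕜 (E × 𝕜)) (f : F → 𝕜) (V : Set F) :
    conicSet D f V = (LinearMap.id.prodMap (LinearMap.snd 𝕜 𝕜 F)) ''
      conicLift D (LinearMap.fst 𝕜 𝕜 F) (epigraphOn f V) := by
  ext ⟨x, z⟩
  constructor
  · rintro ⟨hz, y, hy, hD⟩
    exact ⟨(x, y, z), ⟨⟨hz, hy⟩, hD⟩, rfl⟩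
  · rintro ⟨⟨x, y, z⟩, ⟨⟨hz, hy⟩, hD⟩, ⟨⟩⟩
    exact ⟨hz, y, hy, hD⟩

theorem conicRelaxation_eq_image_conicLift (D : PointedCone 𝕜 (E × 𝕜)) {f : F → 𝕜} {V C : Set F}
    (hf : ∀ z ∈ V, 0 ≤ f z) (hVC : V ⊆ C) (hC : Convex 𝕜 C) :
    conicRelaxation D f V C = (LinearMap.id.prodMap (LinearMap.snd 𝕜 𝕜 F)) ''
      conicLift D (LinearMap.fst 𝕜 𝕜 F) (convexHull 𝕜 (epigraphOn f V)) := by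
  ext ⟨x, z⟩
  constructor
  · rintro ⟨-, y, -, hp, hD⟩
    exact ⟨(x, y, z), ⟨hp, hD⟩, rfl⟩
  · rintro ⟨⟨x, y, z⟩, ⟨hp, hD⟩, ⟨⟩⟩
    have ⟨hy, hz⟩ := convexHull_epigraphOn_subset hf hVC hC hp
    exact ⟨hz, y, hy, hp, hD⟩

theorem convexHull_conicSet (D : PointedCone 𝕜 (E × 𝕜)) {f : F → 𝕜} {V C : Set F}
    (hf : ∀ z ∈ V, 0 ≤ f z) (hVC : V ⊆ C) (hC : Convex 𝕜 C) :
    convexHull 𝕜 (conicSet D f V) = conicRelaxation D f V C := by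
  have hheight : ∀ p ∈ epigraphOn f V, 0 ≤ LinearMap.fst 𝕜 𝕜 F p :=
    fun p hp ↦ (hf p.2 hp.1).trans hp.2
  rw [conicSet_eq_image_conicLift, ← LinearMap.image_convexHull, convexHull_conicLift D _ hheight,
    conicRelaxation_eq_image_conicLift D hf hVC hC]

theorem conv_Sbar_subset_Shat_general (D : PointedCone 𝕜 (E × 𝕜)) {f : F → 𝕜} {V C : Set F}
    (hf : ∀ z ∈ V, 0 ≤ f z) (hVC : V ⊆ C) (hC : Convex 𝕜 C) :
    convexHull 𝕜 (exactConicSet D f V) ⊆ conicRelaxation D f V C ∧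
      convexHull 𝕜 (conicSet D f V) = conicRelaxation D f V C :=
  have hS := convexHull_conicSet D hf hVC hC
  ⟨hS ▸ convexHull_mono (exactConicSet_subset_conicSet D f V), hS⟩

end ConicSets

/-- The cone of pairs `(x, y)` satisfying the constraint `A x + y B ∈ K`, for a convex cone `K`
given as a set together with its closure properties. -/
def constraintCone {𝕜 E G : Type*} [CommRing 𝕜] [PartialOrder 𝕜] [IsOrderedRing 𝕜]
    [AddCommGroup E] [Module 𝕜 E] [AddCommGroup G] [Module 𝕜 G] (K : Set G) (hK0 : 0 ∈ K)
    (hKadd : ∀ a ∈ K, ∀ b ∈ K, a + b ∈ K) (hKsmul : ∀ c : 𝕜, 0 ≤ c → ∀ a ∈ K, c • a ∈ K)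
    (A : E →ₗ[𝕜] G) (B : G) : PointedCone 𝕜 (E × 𝕜) :=
  PointedCone.comap (A.coprod (LinearMap.toSpanSingleton 𝕜 G B))
    { carrier := K
      add_mem' := fun ha hb ↦ hKadd _ ha _ hb
      zero_mem' := hK0
      smul_mem' := fun c a ha ↦ hKsmul c c.2 a ha }

theorem binary_subset_box {ι 𝕜 : Type*} [Zero 𝕜] [One 𝕜] [Preorder 𝕜] [ZeroLEOneClass 𝕜] :
    {z : ι → 𝕜 | ∀ i, z i = 0 ∨ z i = 1} ⊆ {z | ∀ i, z i ∈ Set.Icc 0 1} :=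
  fun z hz i ↦ by rcases hz i with h | h <;> simp [h]

theorem convex_setOf_forall_mem {ι 𝕜 : Type*} {E : ι → Type*} [Semiring 𝕜] [PartialOrder 𝕜]
    [∀ i, AddCommMonoid (E i)] [∀ i, SMul 𝕜 (E i)] {t : ∀ i, Set (E i)}
    (ht : ∀ i, Convex 𝕜 (t i)) : Convex 𝕜 {z : ∀ i, E i | ∀ i, z i ∈ t i} := by
  simpa only [Set.pi, Set.mem_univ, true_imp_iff] using
    convex_pi (s := Set.univ) fun i _ ↦ ht i

/-- Corollary 1: for a nonnegative `f : {0,1}^n → ℝ_+` and a convex cone `K` containing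
the origin, `conv(S̄(f,K)) ⊆ Ŝ(f,K)`, and if `S̄(f,K) = S(f,K)` then
`conv(S̄(f,K)) = Ŝ(f,K)`. -/
theorem conv_Sbar_subset_Shat (n m q : ℕ) (f : (Fin n → ℝ) → ℝ)
    (hf : ∀ z : Fin n → ℝ, (∀ i, z i = 0 ∨ z i = 1) → 0 ≤ f z)
    (K : Set (Fin q → ℝ)) (hK0 : (0 : Fin q → ℝ) ∈ K)
    (hKadd : ∀ a ∈ K, ∀ b ∈ K, a + b ∈ K)
    (hKsmul : ∀ c : ℝ, 0 ≤ c → ∀ a ∈ K, c • a ∈ K)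
    (A : Matrix (Fin q) (Fin m) ℝ) (B : Fin q → ℝ)
    (Sbar S Shat : Set ((Fin m → ℝ) × (Fin n → ℝ)))
    (Epi : Set (ℝ × (Fin n → ℝ)))
    (hSbar : Sbar = {w | (∀ i, w.2 i = 0 ∨ w.2 i = 1) ∧ A.mulVec w.1 + f w.2 • B ∈ K})
    (hS : S = {w | (∀ i, w.2 i = 0 ∨ w.2 i = 1) ∧
      ∃ y : ℝ, f w.2 ≤ y ∧ A.mulVec w.1 + y • B ∈ K})
    (hEpi : Epi = {yz | (∀ i, yz.2 i = 0 ∨ yz.2 i = 1) ∧ f yz.2 ≤ yz.1})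
    (hShat : Shat = {w | (∀ i, w.2 i ∈ Set.Icc (0:ℝ) 1) ∧ ∃ y : ℝ, 0 ≤ y ∧
      (y, w.2) ∈ convexHull ℝ Epi ∧ A.mulVec w.1 + y • B ∈ K}) :
    convexHull ℝ Sbar ⊆ Shat ∧ (Sbar = S → convexHull ℝ Sbar = Shat) := by
  subst hSbar hS hEpi hShat
  have h := conv_Sbar_subset_Shat_general (constraintCone K hK0 hKadd hKsmul A.mulVecLin B) hf
    binary_subset_box (convex_setOf_forall_mem fun _ ↦ convex_Icc 0 1)
  exact ⟨h.1, fun hSS ↦ hSS ▸ h.2⟩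
end

section
/- Let f : {0,1}^n → ℝ be submodular and f̃ := f − f(∅). Then π ∈ ℝ^n is an extreme point of the extended polymatroid P_{f̃} := {π ∈ ℝ^n : Σ_{i∈V} π_i ≤ f(V) − f(∅) for all V ⊆ [n]} if and only if there exists a permutation σ of [n] such that π_{σ(t)} = f(V_t) − f(V_{t−1}) for all t ∈ [n], where V_t := {σ(1),…,σ(t)} and V_0 := ∅. -/
/-!
A point of a polyhedron is extreme exactly when only the zero direction is annihilated by every
constraint tight there. By submodularity, the tight sets of a point of the extended polymatroid form
a lattice, and at an extreme point they separate the elements of the ground set, so there is a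
maximal chain of tight sets growing by one element at a time. Its order of growth is the required
permutation, because the values of a point on a complete chain of tight sets determine the point.
Conversely, the greedy point of an ordering is feasible by diminishing returns, and its initial
segments are a complete chain of tight sets.
-/

section Polyhedron

variable {ι 𝕜 E : Type*} [Field 𝕜] [LinearOrder 𝕜] [IsStrictOrderedRing 𝕜]

lemma exists_pos_forall_mul_abs_le [Finite ι] {g c : ι → 𝕜} (hg : ∀ i, 0 ≤ g i)
    (hc : ∀ i, g i = 0 → c i = 0) : ∃ ε > 0, ∀ i, ε * |c i| ≤ g i := by
  have exists_single (i : ι) : ∃ ε : Set.Ioi (0 : 𝕜), ε * |c i| ≤ g i := by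
    obtain hci | hci := eq_or_ne (c i) 0
    · exact ⟨⟨1, one_pos⟩, by simpa [hci] using hg i⟩
    · have hgi : 0 < g i := (hg i).lt_of_ne' (mt (hc i) hci)
      exact ⟨⟨g i / |c i|, div_pos hgi (abs_pos.2 hci)⟩,
        (div_mul_cancel₀ _ (abs_ne_zero.2 hci)).le⟩
  choose δ hδ using exists_single
  obtain ⟨ε, hε⟩ := Finite.exists_ge δ
  exact ⟨ε, ε.2, fun i ↦
    (mul_le_mul_of_nonneg_right (Subtype.coe_le_coe.2 (hε i)) (abs_nonneg _)).trans (hδ i)⟩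

variable [AddCommGroup E] [Module 𝕜 E]

lemma eq_zero_of_mem_extremePoints_of_add_mem_of_sub_mem {A : Set E} {x d : E}
    (hx : x ∈ A.extremePoints 𝕜) (hadd : x + d ∈ A) (hsub : x - d ∈ A) : d = 0 := by
  simpa using hx.2 hadd hsub (mem_openSegment_add_sub x d)

theorem mem_extremePoints_polyhedron_iff [Finite ι] (ℓ : ι → E →ₗ[𝕜] 𝕜) (b : ι → 𝕜) {x : E} :
    x ∈ Set.extremePoints 𝕜 {y | ∀ i, ℓ i y ≤ b i} ↔
      (∀ i, ℓ i x ≤ b i) ∧ ∀ d, (∀ i, ℓ i x = b i → ℓ i d = 0) → d = 0 := by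
  constructor
  · refine fun hx ↦ ⟨hx.1, fun d hd ↦ ?_⟩
    obtain ⟨ε, hε, hstep⟩ := exists_pos_forall_mul_abs_le (g := fun i ↦ b i - ℓ i x)
      (c := fun i ↦ ℓ i d) (fun i ↦ sub_nonneg.2 (hx.1 i))
      fun i hi ↦ hd i (sub_eq_zero.1 hi).symm
    have habs (i : ι) : |ℓ i (ε • d)| ≤ b i - ℓ i x := by
      simpa [abs_mul, abs_of_pos hε] using hstep i
    have hεd : ε • d = 0 := by
      refine eq_zero_of_mem_extremePoints_of_add_mem_of_sub_mem hx (fun i ↦ ?_) fun i ↦ ?_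
      · rw [map_add]
        linarith [le_of_abs_le (habs i)]
      · rw [map_sub]
        linarith [neg_le_of_abs_le (habs i)]
    exact (smul_eq_zero_iff_right hε.ne').1 hεd
  · rintro ⟨hx, hspan⟩
    refine mem_extremePoints_iff_left.2 ⟨hx, ?_⟩
    rintro y hy z hz ⟨s, t, hs, ht, hst, rfl⟩
    refine sub_eq_zero.1 (hspan _ fun i hi ↦ ?_)
    have hyi : ℓ i y = b i := (hy i).eq_of_not_lt fun hlt ↦ by
      have hltb : ℓ i (s • y + t • z) < b i := calc
        ℓ i (s • y + t • z) = s * ℓ i y + t * ℓ i z := by simp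
        _ < s * b i + t * b i :=
          add_lt_add_of_lt_of_le (mul_lt_mul_of_pos_left hlt hs)
            (mul_le_mul_of_nonneg_left (hz i) ht.le)
        _ = b i := by rw [← add_mul, hst, one_mul]
      exact hltb.ne hi
    rw [map_sub, hyi, hi, sub_self]

end Polyhedron

section InitialSegment

variable {α : Type*} [Fintype α] {n : ℕ}

/-- The set of the first `k` elements of `α` in the ordering `e`; it is all of `α` for `n ≤ k`. -/
def initialSegment (e : Fin n ≃ α) (k : ℕ) : Finset α :=
  {a | (e.symm a : ℕ) < k}

lemma mem_initialSegment {e : Fin n ≃ α} {k : ℕ} {a : α} :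
    a ∈ initialSegment e k ↔ (e.symm a : ℕ) < k := by
  simp [initialSegment]

@[simp]
lemma initialSegment_zero (e : Fin n ≃ α) : initialSegment e 0 = ∅ := by
  simp [initialSegment]

lemma initialSegment_eq_image [DecidableEq α] (e : Fin n ≃ α) (k : ℕ) :
    initialSegment e k = (Finset.univ.filter fun s : Fin n ↦ (s : ℕ) < k).image e := by
  ext a
  obtain ⟨s, rfl⟩ := e.surjective a
  simp [mem_initialSegment]

lemma initialSegment_succ [DecidableEq α] (e : Fin n ≃ α) (t : Fin n) :
    initialSegment e (t + 1) = insert (e t) (initialSegment e t) := by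
  ext a
  obtain ⟨s, rfl⟩ := e.surjective a
  simp only [Finset.mem_insert, mem_initialSegment, Equiv.symm_apply_apply, e.injective.eq_iff,
    Fin.ext_iff]
  omega

lemma sum_initialSegment_succ {M : Type*} [AddCommMonoid M] (e : Fin n ≃ α) (x : α → M)
    (t : Fin n) :
    ∑ a ∈ initialSegment e (t + 1), x a = x (e t) + ∑ a ∈ initialSegment e t, x a := by
  classical
  rw [initialSegment_succ, Finset.sum_insert (by simp [mem_initialSegment])]

lemma eq_of_sum_initialSegment_eq {M : Type*} [AddCommGroup M] (e : Fin n ≃ α) {x y : α → M}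
    (h : ∀ k, ∑ a ∈ initialSegment e k, x a = ∑ a ∈ initialSegment e k, y a) : x = y := by
  ext a
  obtain ⟨t, rfl⟩ := e.surjective a
  simpa only [sum_initialSegment_succ, h t, add_left_inj] using h (t + 1)

variable [DecidableEq α]

lemma exists_nodup_list_of_forall_exists_insert {P : Finset α → Prop} (hempty : P ∅)
    (hinsert : ∀ A, P A → A ≠ Finset.univ → ∃ a ∉ A, P (insert a A)) {k : ℕ}
    (hk : k ≤ Fintype.card α) :
    ∃ l : List α, l.Nodup ∧ l.length = k ∧ ∀ s, s <+: l → P s.toFinset := by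
  induction k with
  | zero => exact ⟨[], by simpa using hempty⟩
  | succ k ih =>
    obtain ⟨l, hnodup, hlength, hprefix⟩ := ih (Nat.le_of_succ_le hk)
    have hne : l.toFinset ≠ Finset.univ := by
      rw [← Finset.card_lt_iff_ne_univ, List.toFinset_card_of_nodup hnodup]
      omega
    obtain ⟨a, ha, hPa⟩ := hinsert _ (hprefix l List.prefix_rfl) hne
    rw [List.mem_toFinset] at ha
    refine ⟨l ++ [a], by simpa [List.nodup_append] using ⟨hnodup, fun b hb h ↦ ha (h ▸ hb)⟩,
      by simp [hlength], fun s hs ↦ ?_⟩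
    obtain rfl | hs := List.prefix_concat_iff.1 hs
    · simpa [List.toFinset_append, Finset.union_comm _ {a}, ← Finset.insert_eq] using hPa
    · exact hprefix s hs

lemma exists_equiv_forall_initialSegment (hn : Fintype.card α = n) {P : Finset α → Prop}
    (hempty : P ∅) (hinsert : ∀ A, P A → A ≠ Finset.univ → ∃ a ∉ A, P (insert a A)) :
    ∃ e : Fin n ≃ α, ∀ k, P (initialSegment e k) := by
  obtain ⟨l, hnodup, rfl, hprefix⟩ := exists_nodup_list_of_forall_exists_insert hempty hinsert hn.ge
  have hmem (a : α) : a ∈ l := by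
    have huniv : l.toFinset = Finset.univ := by
      rw [← Finset.card_eq_iff_eq_univ, List.toFinset_card_of_nodup hnodup, hn]
    simpa using huniv.ge (Finset.mem_univ a)
  refine ⟨hnodup.getEquivOfForallMemList l hmem, fun k ↦ ?_⟩
  convert hprefix (l.take k) (l.take_prefix k)
  ext a
  simp [mem_initialSegment, List.mem_take_iff_idxOf_lt (hmem a)]

end InitialSegment

lemma exists_insert_mem_of_isSublattice {α : Type*} [Finite α] [DecidableEq α]
    {L : Set (Finset α)} (hL : IsSublattice L) (hcover : ∀ a, ∃ C ∈ L, a ∈ C)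
    (hseparate : ∀ a b, (∀ C ∈ L, a ∈ C ↔ b ∈ C) → a = b) {A : Finset α} (hA : A ∈ L)
    (hne : ∃ a, a ∉ A) : ∃ a ∉ A, insert a A ∈ L := by
  obtain ⟨B, ⟨hB, hAB⟩, hmin⟩ : ∃ B, Minimal (fun B ↦ B ∈ L ∧ A ⊂ B) B := by
    obtain ⟨a, ha⟩ := hne
    obtain ⟨C, hC, haC⟩ := hcover a
    exact (Set.toFinite {B | B ∈ L ∧ A ⊂ B}).exists_minimal
      ⟨A ∪ C, hL.supClosed hA hC, Finset.subset_union_left, fun h ↦ ha (h (by simp [haC]))⟩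
  -- `A ∪ (B ∩ C)` lies between `A` and `B`, so a member of `L` meeting `B \ A` contains it.
  have hatom {a b : α} {C : Finset α} (haB : a ∈ B) (haA : a ∉ A) (hb : b ∈ B) (hbA : b ∉ A)
      (hC : C ∈ L) (haC : a ∈ C) : b ∈ C := by
    have hss : A ⊂ A ∪ (B ∩ C) :=
      ⟨Finset.subset_union_left, fun h ↦ haA (h (by simp [haB, haC]))⟩
    have hle : B ⊆ A ∪ (B ∩ C) := hmin ⟨hL.supClosed hA (hL.infClosed hB hC), hss⟩
      (Finset.union_subset hAB.1 Finset.inter_subset_left)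
    simpa [hb, hbA] using hle hb
  obtain ⟨a, haB, haA⟩ := Finset.exists_of_ssubset hAB
  have hBa : insert a A = B := by
    refine (Finset.insert_subset haB hAB.1).antisymm fun b hb ↦ ?_
    by_contra hba
    obtain ⟨hne, hbA⟩ : b ≠ a ∧ b ∉ A := by simpa using hba
    exact hne (hseparate b a fun C hC ↦ ⟨hatom hb hbA haB haA hC, hatom haB haA hb hbA hC⟩)
  exact ⟨a, haA, hBa ▸ hB⟩

section ExtendedPolymatroid

variable {α M : Type*} [AddCommGroup M]

/-- The extended polymatroid of the normalised set function `V ↦ f V - f ∅`. -/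
def extendedPolymatroid [LE M] (f : Finset α → M) : Set (α → M) :=
  {x | ∀ V, ∑ a ∈ V, x a ≤ f V - f ∅}

/-- The sets whose constraint in the extended polymatroid of `f` holds with equality at `x`. -/
def tightSets (f : Finset α → M) (x : α → M) : Set (Finset α) :=
  {V | ∑ a ∈ V, x a = f V - f ∅}

lemma mem_tightSets {f : Finset α → M} {x : α → M} {V : Finset α} :
    V ∈ tightSets f x ↔ ∑ a ∈ V, x a = f V - f ∅ :=
  Iff.rfl

lemma empty_mem_tightSets (f : Finset α → M) (x : α → M) : ∅ ∈ tightSets f x := by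
  simp [mem_tightSets]

/-- Submodularity of a set function, in the union–intersection form. -/
def IsSubmodular [LE M] [DecidableEq α] (f : Finset α → M) : Prop :=
  ∀ S T, f (S ∪ T) + f (S ∩ T) ≤ f S + f T

section Submodular

variable [PartialOrder M] [IsOrderedAddMonoid M] [DecidableEq α] {f : Finset α → M}

/- Feasibility and submodularity squeeze the sum of the two slacks at `S ∪ T` and `S ∩ T`
to zero. -/
lemma IsSubmodular.isSublattice_tightSets (hf : IsSubmodular f) {x : α → M}
    (hx : x ∈ extendedPolymatroid f) : IsSublattice (tightSets f x) := by
  have union_inter {S T : Finset α} (hS : S ∈ tightSets f x) (hT : T ∈ tightSets f x) :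
      S ∪ T ∈ tightSets f x ∧ S ∩ T ∈ tightSets f x := by
    refine (add_eq_add_iff_eq_and_eq (hx (S ∪ T)) (hx (S ∩ T))).1
      ((add_le_add (hx (S ∪ T)) (hx (S ∩ T))).antisymm ?_)
    calc (f (S ∪ T) - f ∅) + (f (S ∩ T) - f ∅)
        = (f (S ∪ T) + f (S ∩ T)) - (f ∅ + f ∅) := sub_add_sub_comm _ _ _ _
      _ ≤ (f S + f T) - (f ∅ + f ∅) := sub_le_sub_right (hf S T) _
      _ = (f S - f ∅) + (f T - f ∅) := add_sub_add_comm _ _ _ _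
      _ = ∑ a ∈ S, x a + ∑ a ∈ T, x a := by rw [mem_tightSets.1 hS, mem_tightSets.1 hT]
      _ = ∑ a ∈ S ∪ T, x a + ∑ a ∈ S ∩ T, x a := Finset.sum_union_inter.symm
  exact ⟨fun S hS T hT ↦ (union_inter hS hT).1, fun S hS T hT ↦ (union_inter hS hT).2⟩

lemma IsSubmodular.insert_sub_le_insert_sub (hf : IsSubmodular f) {S T : Finset α} (hST : S ⊆ T)
    {a : α} (ha : a ∉ T) : f (insert a T) - f T ≤ f (insert a S) - f S := by
  have hunion : insert a S ∪ T = insert a T := by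
    rw [Finset.insert_union, Finset.union_eq_right.2 hST]
  have hinter : insert a S ∩ T = S := by
    rw [Finset.insert_inter_of_notMem ha, Finset.inter_eq_left.2 hST]
  simpa only [hunion, hinter, sub_le_sub_iff] using hf (insert a S) T

end Submodular

section Greedy

variable [Fintype α] {n : ℕ}

/-- The point produced by the greedy algorithm for the ordering `e`: each element gets the marginal
gain of `f` when it joins its predecessors. -/
def greedyPoint (f : Finset α → M) (e : Fin n ≃ α) (a : α) : M :=
  f (initialSegment e (e.symm a + 1)) - f (initialSegment e (e.symm a))

lemma eq_greedyPoint_iff [DecidableEq α] {f : Finset α → M} {e : Fin n ≃ α} {x : α → M} :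
    x = greedyPoint f e ↔ ∀ t : Fin n,
      x (e t) = f ((Finset.univ.filter (fun s : Fin n ↦ s ≤ t)).image e)
        - f ((Finset.univ.filter (fun s : Fin n ↦ s < t)).image e) := by
  simp only [funext_iff, e.surjective.forall, greedyPoint, initialSegment_eq_image,
    Order.lt_add_one_iff, Equiv.symm_apply_apply, Fin.val_fin_le, Fin.val_fin_lt]

lemma initialSegment_mem_tightSets_greedyPoint (f : Finset α → M) (e : Fin n ≃ α) (k : ℕ) :
    initialSegment e k ∈ tightSets f (greedyPoint f e) := by
  classical
  induction k with
  | zero => simpa using empty_mem_tightSets f _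
  | succ k ih =>
    obtain hk | hk := lt_or_ge k n
    · have hsum := sum_initialSegment_succ e (greedyPoint f e) ⟨k, hk⟩
      rw [mem_tightSets, hsum, mem_tightSets.1 ih, greedyPoint, Equiv.symm_apply_apply,
        sub_add_sub_cancel]
    · have hsegment : initialSegment e (k + 1) = initialSegment e k := by
        ext a
        simp only [mem_initialSegment]
        omega
      rwa [hsegment]

lemma eq_greedyPoint_of_forall_initialSegment_mem_tightSets {f : Finset α → M} {e : Fin n ≃ α}
    {x : α → M} (h : ∀ k, initialSegment e k ∈ tightSets f x) : x = greedyPoint f e := by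
  classical
  exact eq_of_sum_initialSegment_eq e fun k ↦
    (h k).trans (initialSegment_mem_tightSets_greedyPoint f e k).symm

lemma IsSubmodular.greedyPoint_mem_extendedPolymatroid [PartialOrder M] [IsOrderedAddMonoid M]
    [DecidableEq α] {f : Finset α → M} (hf : IsSubmodular f) (e : Fin n ≃ α) :
    greedyPoint f e ∈ extendedPolymatroid f := by
  intro V
  induction V using Finset.induction_on_max_value e.symm with
  | empty => simp
  | insert a S ha hmax ih =>
    have hS : S ⊆ initialSegment e (e.symm a) := fun b hb ↦ mem_initialSegment.2 <|
      (hmax b hb).lt_of_ne (e.symm.injective.ne fun h ↦ ha (h ▸ hb))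
    have hgain : greedyPoint f e a ≤ f (insert a S) - f S := by
      rw [greedyPoint, initialSegment_succ, Equiv.apply_symm_apply]
      exact hf.insert_sub_le_insert_sub hS (by simp [mem_initialSegment])
    calc ∑ b ∈ insert a S, greedyPoint f e b
        = greedyPoint f e a + ∑ b ∈ S, greedyPoint f e b := Finset.sum_insert ha
      _ ≤ (f (insert a S) - f S) + (f S - f ∅) := add_le_add hgain ih
      _ = f (insert a S) - f ∅ := sub_add_sub_cancel _ _ _

end Greedy

end ExtendedPolymatroid

section ExtremePoints

variable {α 𝕜 : Type*} [Field 𝕜] [LinearOrder 𝕜] [IsStrictOrderedRing 𝕜]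
  {f : Finset α → 𝕜} {x : α → 𝕜}

lemma mem_extremePoints_extendedPolymatroid_iff [Finite α] :
    x ∈ Set.extremePoints 𝕜 (extendedPolymatroid f) ↔
      x ∈ extendedPolymatroid f ∧ ∀ d : α → 𝕜, (∀ V ∈ tightSets f x, ∑ a ∈ V, d a = 0) → d = 0 := by
  simpa [extendedPolymatroid, tightSets] using mem_extremePoints_polyhedron_iff (x := x)
    (fun V : Finset α ↦ ∑ a ∈ V, LinearMap.proj (R := 𝕜) (φ := fun _ ↦ 𝕜) a) fun V ↦ f V - f ∅

lemma exists_mem_tightSets_of_mem_extremePoints [Finite α]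
    (hx : x ∈ Set.extremePoints 𝕜 (extendedPolymatroid f)) (a : α) :
    ∃ V ∈ tightSets f x, a ∈ V := by
  classical
  by_contra! hnone
  have hzero : (Pi.single a 1 : α → 𝕜) = 0 :=
    (mem_extremePoints_extendedPolymatroid_iff.1 hx).2 _ fun V hV ↦ by simp [hnone V hV]
  simp at hzero

lemma eq_of_forall_mem_tightSets_of_mem_extremePoints [Finite α]
    (hx : x ∈ Set.extremePoints 𝕜 (extendedPolymatroid f)) {a b : α}
    (hab : ∀ V ∈ tightSets f x, a ∈ V ↔ b ∈ V) : a = b := by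
  classical
  have hzero : (Pi.single a 1 - Pi.single b 1 : α → 𝕜) = 0 :=
    (mem_extremePoints_extendedPolymatroid_iff.1 hx).2 _ fun V hV ↦ by
      simp [Finset.sum_sub_distrib, hab V hV]
  by_contra hne
  simpa [hne] using congrFun hzero a

lemma IsSubmodular.greedyPoint_mem_extremePoints [Fintype α] [DecidableEq α] {n : ℕ}
    (hf : IsSubmodular f) (e : Fin n ≃ α) :
    greedyPoint f e ∈ Set.extremePoints 𝕜 (extendedPolymatroid f) :=
  mem_extremePoints_extendedPolymatroid_iff.2 ⟨hf.greedyPoint_mem_extendedPolymatroid e,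
    fun _ hd ↦ eq_of_sum_initialSegment_eq e fun k ↦ by
      simpa using hd _ (initialSegment_mem_tightSets_greedyPoint f e k)⟩

lemma IsSubmodular.exists_eq_greedyPoint_of_mem_extremePoints [Fintype α] [DecidableEq α]
    {n : ℕ} (hf : IsSubmodular f) (hn : Fintype.card α = n)
    (hx : x ∈ Set.extremePoints 𝕜 (extendedPolymatroid f)) :
    ∃ e : Fin n ≃ α, x = greedyPoint f e := by
  obtain ⟨e, he⟩ := exists_equiv_forall_initialSegment hn (empty_mem_tightSets f x) fun A hA hne ↦
    exists_insert_mem_of_isSublattice (hf.isSublattice_tightSets hx.1)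
      (exists_mem_tightSets_of_mem_extremePoints hx)
      (fun _ _ ↦ eq_of_forall_mem_tightSets_of_mem_extremePoints hx) hA
      (by simpa [Finset.eq_univ_iff_forall] using hne)
  exact ⟨e, eq_greedyPoint_of_forall_initialSegment_mem_tightSets he⟩

theorem extreme_points_extended_polymatroid_general [Fintype α] [DecidableEq α] {n : ℕ}
    (hn : Fintype.card α = n) (hf : IsSubmodular f) :
    x ∈ Set.extremePoints 𝕜 (extendedPolymatroid f) ↔
      ∃ e : Fin n ≃ α, ∀ t : Fin n,
        x (e t) = f ((Finset.univ.filter (fun s : Fin n ↦ s ≤ t)).image e)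
          - f ((Finset.univ.filter (fun s : Fin n ↦ s < t)).image e) := by
  simp only [← eq_greedyPoint_iff]
  refine ⟨hf.exists_eq_greedyPoint_of_mem_extremePoints hn, ?_⟩
  rintro ⟨e, rfl⟩
  exact hf.greedyPoint_mem_extremePoints e

end ExtremePoints

/-- Theorem (Edmonds): for a submodular `f`, a point `π` is an extreme point of the
extended polymatroid `P_{f̃} = {π : Σ_{i∈V} π_i ≤ f(V) − f(∅) ∀ V ⊆ [n]}` iff there is
a permutation `σ` of `[n]` with `π_{σ(t)} = f(V_t) − f(V_{t−1})`, where
`V_t = {σ(1),…,σ(t)}` and `V_0 = ∅`. (Here `t : Fin n` is 0-based, so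
`V_{t+1} = σ({s : s ≤ t})` and `V_t = σ({s : s < t})`.) -/
theorem extreme_points_extended_polymatroid (n : ℕ) (f : Finset (Fin n) → ℝ)
    (hsub : ∀ S₁ S₂ : Finset (Fin n), f (S₁ ∪ S₂) + f (S₁ ∩ S₂) ≤ f S₁ + f S₂)
    (π : Fin n → ℝ) :
    π ∈ Set.extremePoints ℝ
        {π' : Fin n → ℝ | ∀ V : Finset (Fin n), ∑ i ∈ V, π' i ≤ f V - f ∅}
    ↔ ∃ σ : Equiv.Perm (Fin n), ∀ t : Fin n,
        π (σ t) = f ((Finset.univ.filter (fun s : Fin n => s ≤ t)).image σ)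
                  - f ((Finset.univ.filter (fun s : Fin n => s < t)).image σ) :=
  extreme_points_extended_polymatroid_general (Fintype.card_fin n) hsub
end
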